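/- arXiv:math/9606225 — 3 statements merged into one kernel-verified Lean document; each statement's English description precedes it below -/
import Mathlib

section
/- Let G be a group and let A be a nontrivial normal subgroup of G which is isomorphic, as an abstract group, to an additive subgroup of the rational numbers ℚ. Then G has a subgroup K of index at most 2 with A ≤ K such that either the abelianization of K is infinite, or A is contained in the center of K (i.e., every element of A commutes with every element of K). -/
/-! Since `ℚ` is divisible, every endomorphism of a nontrivial subgroup of `ℚ` extends to `ℚ`,
hence is multiplication by a rational number. So `Aut A` embeds in `ℚˣ`, and conjugation gives a
character `χ : G →* ℚˣ` whose kernel is the centralizer of the abelian group `A`. Let `K` be the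
subgroup where `χ` is positive. If `χ` is trivial on `K`, then `K` centralizes `A`; otherwise `χ`
takes a positive value other than `1`, which has infinite order, so the abelianization of `K` is
infinite. -/

open Function

section RationalSubgroups

variable {B : Type*} [AddCommGroup B] {ι : B →+ ℚ}

theorem exists_forall_eq_mul_of_injective_rat (hι : Injective ι) (f : B →+ ℚ) :
    ∃ c : ℚ, ∀ b, f b = c * ι b := by
  obtain ⟨g, rfl⟩ := (Module.Baer.of_divisible ℚ).extension_property_addMonoidHom ι hι f
  refine ⟨g 1, fun b => ?_⟩
  calc g (ι b) = g (ι b • 1) := by rw [smul_eq_mul, mul_one]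
    _ = g 1 * ι b := by rw [map_rat_smul, smul_eq_mul, mul_comm]

theorem exists_injective_ringHom_addMonoidEnd_rat [Nontrivial B] (hι : Injective ι) :
    ∃ φ : AddMonoid.End B →+* ℚ, Injective φ := by
  choose c hc using fun f : AddMonoid.End B => exists_forall_eq_mul_of_injective_rat hι (ι.comp f)
  replace hc (f : AddMonoid.End B) (b : B) : ι (f b) = c f * ι b := hc f b
  obtain ⟨b, hb⟩ := exists_ne (0 : B)
  have hιb : ι b ≠ 0 := (map_ne_zero_iff ι hι).mpr hb
  have c_eq {f : AddMonoid.End B} {q : ℚ} (h : ι (f b) = q * ι b) : c f = q :=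
    mul_right_cancel₀ hιb ((hc f b).symm.trans h)
  let φ : AddMonoid.End B →+* ℚ :=
    { toFun := c
      map_one' := c_eq (by rw [AddMonoid.End.coe_one, id, one_mul])
      map_mul' f g := c_eq (by rw [AddMonoid.End.coe_mul, comp_apply, hc, hc, mul_assoc])
      map_zero' := c_eq (by rw [AddMonoid.End.zero_apply, map_zero, zero_mul])
      map_add' f g := c_eq ((map_add ι (f b) (g b)).trans (by rw [hc, hc, add_mul])) }
  refine ⟨φ, fun f g (hfg : c f = c g) => AddMonoidHom.ext fun x => hι ?_⟩
  exact (hc f x).trans (hfg ▸ (hc g x).symm)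

theorem exists_injective_mulAut_monoidHom_ratUnits [Nontrivial B] (hι : Injective ι) :
    ∃ θ : MulAut (Multiplicative B) →* ℚˣ, Injective θ := by
  obtain ⟨φ, hφ⟩ := exists_injective_ringHom_addMonoidEnd_rat hι
  let ψ : MulAut (Multiplicative B) →* AddMonoid.End B :=
    (addMonoidEndToMultiplicative B).symm.toMonoidHom.comp
      (MulDistribMulAction.toMonoidEnd (MulAut (Multiplicative B)) (Multiplicative B))
  refine ⟨((φ : AddMonoid.End B →* ℚ).comp ψ).toHomUnits, fun σ τ h => ?_⟩
  have hψ : ψ σ = ψ τ := hφ (congrArg Units.val h)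
  exact MulEquiv.ext fun b => DFunLike.congr_fun hψ b.toAdd

end RationalSubgroups

theorem ker_conjNormal {G : Type*} [Group G] (H : Subgroup G) [H.Normal] :
    (MulAut.conjNormal : G →* MulAut H).ker = Subgroup.centralizer H := by
  ext g
  rw [MonoidHom.mem_ker, Subgroup.mem_centralizer_iff]
  simp only [MulEquiv.ext_iff, Subtype.ext_iff, MulAut.conjNormal_apply, MulAut.one_apply,
    mul_inv_eq_iff_eq_mul, Subtype.forall, SetLike.mem_coe, eq_comm (a := g * _)]

theorem infinite_abelianization_of_not_isOfFinOrder {G M : Type*} [Group G] [CommGroup M]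
    (f : G →* M) {g : G} (hg : ¬IsOfFinOrder (f g)) : Infinite (Abelianization G) := by
  refine not_finite_iff_infinite.mp fun _ => hg ?_
  rw [← Abelianization.lift_apply_of f g]
  exact (Abelianization.lift f).isOfFinOrder (isOfFinOrder_of_finite (Abelianization.of g))

section PositivePart

variable {G R : Type*} [Group G] [LinearOrder R]

theorem index_comap_posSubgroup [Ring R] [IsStrictOrderedRing R] (χ : G →* Rˣ) :
    ((Units.posSubgroup R).comap χ).index = 1 ∨ ((Units.posSubgroup R).comap χ).index = 2 := by
  have := Subgroup.normal_of_index_eq_two (Units.index_posSubgroup R)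
  rw [← Nat.dvd_prime Nat.prime_two, Subgroup.index_comap, ← Units.index_posSubgroup R]
  exact Subgroup.relIndex_dvd_index_of_normal _ _

theorem infinite_abelianization_or_comap_posSubgroup_le_ker [CommRing R] [IsStrictOrderedRing R]
    (χ : G →* Rˣ) :
    Infinite (Abelianization ((Units.posSubgroup R).comap χ)) ∨
      (Units.posSubgroup R).comap χ ≤ χ.ker := by
  refine or_iff_not_imp_right.mpr fun h => ?_
  obtain ⟨k, hk, hχk⟩ := SetLike.not_le_iff_exists.mp h
  have hpos : 0 < (χ k : R) := hk
  refine infinite_abelianization_of_not_isOfFinOrder (χ.comp (Subgroup.subtype _)) (g := ⟨k, hk⟩)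
    fun hfin => hχk ?_
  exact Units.ext ((Units.coeHom R).isOfFinOrder hfin |>.eq_one hpos.le)

end PositivePart

/-- If `A` is a nontrivial normal subgroup of `G` isomorphic (as an abstract group) to an
additive subgroup of `ℚ`, then `G` has a subgroup `K` of index at most 2 containing `A`
such that either the abelianization of `K` is infinite or `A` is contained in the
center of `K`. -/
theorem exists_index_two_subgroup_of_normal_rational_subgroup
    {G : Type*} [Group G] (A : Subgroup G) (hA : A ≠ ⊥) [A.Normal]
    (hiso : ∃ B : AddSubgroup ℚ, Nonempty (A ≃* Multiplicative B)) :
    ∃ K : Subgroup G, (K.index = 1 ∨ K.index = 2) ∧ A ≤ K ∧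
      (Infinite (Abelianization K) ∨ ∀ a ∈ A, ∀ k ∈ K, a * k = k * a) := by
  obtain ⟨B, ⟨e⟩⟩ := hiso
  have : Nontrivial A := A.nontrivial_iff_ne_bot.mpr hA
  have : Nontrivial B := e.symm.toEquiv.nontrivial
  have : IsMulCommutative A := ⟨⟨fun a b => e.injective (by rw [map_mul, map_mul, mul_comm])⟩⟩
  obtain ⟨θ, hθ⟩ := exists_injective_mulAut_monoidHom_ratUnits B.subtype_injective
  let χ : G →* ℚˣ := (θ.comp (MulAut.congr e).toMonoidHom).comp MulAut.conjNormal
  have ker_χ : χ.ker = Subgroup.centralizer A := by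
    rw [← ker_conjNormal A]
    exact MonoidHom.ker_comp_of_injective _ _ (hθ.comp (MulAut.congr e).injective)
  refine ⟨(Units.posSubgroup ℚ).comap χ, index_comap_posSubgroup χ, ?_, ?_⟩
  · calc A ≤ Subgroup.centralizer A := A.le_centralizer
      _ = χ.ker := ker_χ.symm
      _ ≤ (Units.posSubgroup ℚ).comap χ := χ.ker_le_comap _
  · refine (infinite_abelianization_or_comap_posSubgroup_le_ker χ).imp_right fun hK a ha k hk => ?_
    exact Subgroup.mem_centralizer_iff.mp (ker_χ ▸ hK hk) a ha
end

section
/- Let D∞ be the infinite dihedral group (the group with presentation ⟨x, y : x² = 1, xyx = y⁻¹⟩), and let R = ⟨y⟩ be its index-two infinite cyclic subgroup. Let Q be a group and ρ : Q → D∞ a group homomorphism, and suppose there exist a group H, a surjective group homomorphism ψ from H onto the kernel of ρ, and a normal abelian subgroup A of H such that every element of H has some positive power lying in A. Then every nontrivial torsion-free subgroup G of Q contains a nontrivial subgroup G' of index at most 2 in G such that either G' has infinite abelianization or G' contains a nontrivial normal abelian subgroup. -/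
/-!
Let `G'` be the preimage of the rotation subgroup under the restriction of `ρ` to `G`; it is
nontrivial because it has finite index and `G` is infinite. If `ρ` is nontrivial on `G'`, then
`ρ(G')` is an infinite cyclic quotient of `G'`. Otherwise `G'` embeds in `ker ρ`, and its
intersection with `ψ(A)` is normal and abelian. This intersection contains a positive power of every
element of `G'`, so it is nontrivial.
-/

section TorsionFree

variable {G : Type*} [Group G]

theorem forall_coe_not_isOfFinOrder {B : Subgroup G} (htf : ∀ b ∈ B, b ≠ 1 → ¬IsOfFinOrder b)
    (b : B) (hb : b ≠ 1) : ¬IsOfFinOrder b := fun hfin =>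
  htf b b.2 (OneMemClass.coe_eq_one.not.2 hb) (B.subtype.isOfFinOrder hfin)

variable [Nontrivial G]

theorem infinite_of_forall_not_isOfFinOrder (htf : ∀ g : G, g ≠ 1 → ¬IsOfFinOrder g) :
    Infinite G := by
  obtain ⟨g, hg⟩ := exists_ne (1 : G)
  by_contra hfin
  rw [not_infinite_iff_finite] at hfin
  exact htf g hg (isOfFinOrder_of_finite g)

variable {H K : Type*} [Group H] [Group K]

theorem comap_ne_bot_of_forall_pow_mem (htf : ∀ g : G, g ≠ 1 → ¬IsOfFinOrder g) (f : G →* K)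
    {N : Subgroup K} (hN : ∀ k : K, ∃ n : ℕ, 1 ≤ n ∧ k ^ n ∈ N) : N.comap f ≠ ⊥ := by
  obtain ⟨g, hg⟩ := exists_ne (1 : G)
  obtain ⟨n, hn, hmem⟩ := hN (f g)
  have hgn : g ^ n ∈ N.comap f := Subgroup.mem_comap.2 (map_pow f g n ▸ hmem)
  intro hbot
  rw [hbot, Subgroup.mem_bot] at hgn
  exact htf g hg (isOfFinOrder_iff_pow_eq_one.2 ⟨n, hn, hgn⟩)

theorem exists_abelian_normal_subgroup_of_injective
    (htf : ∀ g : G, g ≠ 1 → ¬IsOfFinOrder g) {f : G →* K} (hf : Function.Injective f)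
    {ψ : H →* K} (hψ : Function.Surjective ψ)
    {A : Subgroup H} [hA : A.Normal] (hab : ∀ a ∈ A, ∀ b ∈ A, a * b = b * a)
    (hpow : ∀ h : H, ∃ n : ℕ, 1 ≤ n ∧ h ^ n ∈ A) :
    ∃ N : Subgroup G, N ≠ ⊥ ∧ N.Normal ∧ ∀ a ∈ N, ∀ b ∈ N, a * b = b * a := by
  have hnormal : (A.map ψ).Normal := hA.map ψ hψ
  have hpow_map (k : K) : ∃ n : ℕ, 1 ≤ n ∧ k ^ n ∈ A.map ψ := by
    obtain ⟨h, rfl⟩ := hψ k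
    obtain ⟨n, hn, hmem⟩ := hpow h
    exact ⟨n, hn, map_pow ψ h n ▸ Subgroup.mem_map_of_mem ψ hmem⟩
  have : IsMulCommutative A := .of_setLike_mul_comm hab
  have : IsMulCommutative ((A.map ψ).comap f) := Subgroup.comap_injective_isMulCommutative _ hf
  exact ⟨(A.map ψ).comap f, comap_ne_bot_of_forall_pow_mem htf f hpow_map, hnormal.comap f,
    fun _ ha _ hb => setLike_mul_comm ha hb⟩

end TorsionFree

section FiniteIndex

variable {G K : Type*} [Group G] [Group K]

theorem ne_bot_of_finiteIndex [Infinite G] {N : Subgroup G} (hN : N.FiniteIndex) : N ≠ ⊥ := by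
  rintro rfl
  exact hN.index_ne_zero (Subgroup.index_bot.trans Nat.card_eq_zero_of_infinite)

variable (R : Subgroup K) [R.FiniteIndex] (f : G →* K)

theorem finiteIndex_comap : (R.comap f).FiniteIndex := by
  rw [Subgroup.finiteIndex_iff, Subgroup.index_comap]
  exact R.isFiniteRelIndex_of_finiteIndex.relIndex_ne_zero

theorem index_comap_le_index : (R.comap f).index ≤ R.index := by
  rw [Subgroup.index_comap, ← R.relIndex_top_right]
  exact Subgroup.relIndex_le_of_le_right le_top
    R.isFiniteRelIndex_of_finiteIndex.relIndex_ne_zero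

end FiniteIndex

section InfiniteAbelianization

variable {G K : Type*} [Group G] [Group K]

theorem infinite_abelianization_of_surjective [Infinite (Abelianization K)] {f : G →* K}
    (hf : Function.Surjective f) : Infinite (Abelianization G) := by
  refine Infinite.of_surjective (Abelianization.map f) fun y => ?_
  obtain ⟨k, rfl⟩ := QuotientGroup.mk_surjective y
  obtain ⟨g, rfl⟩ := hf k
  exact ⟨Abelianization.of g, Abelianization.map_of f g⟩

open scoped IsMulCommutative in
theorem infinite_abelianization_of_isMulCommutative [IsMulCommutative G] [Infinite G] :
    Infinite (Abelianization G) :=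
  Infinite.of_injective _ (Abelianization.equivOfComm (H := G)).injective

theorem not_isOfFinOrder_of_mem_zpowers {g x : G} (hg : ¬IsOfFinOrder g)
    (hx : x ∈ Subgroup.zpowers g) (hx_ne : x ≠ 1) : ¬IsOfFinOrder x := by
  obtain ⟨k, rfl⟩ := hx
  have hk : k ≠ 0 := by
    rintro rfl
    exact hx_ne (zpow_zero g)
  intro hfin
  obtain ⟨m, hm, hpow⟩ := isOfFinOrder_iff_zpow_eq_one.1 hfin
  exact hg (isOfFinOrder_iff_zpow_eq_one.2
    ⟨k * m, mul_ne_zero hk hm, (zpow_mul g k m).trans hpow⟩)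

theorem infinite_abelianization_of_le_zpowers {g : G} (hg : ¬IsOfFinOrder g) {B : Subgroup G}
    (hB : B ≤ Subgroup.zpowers g) (hB_ne : B ≠ ⊥) : Infinite (Abelianization B) := by
  have : Nontrivial B := B.nontrivial_iff_ne_bot.2 hB_ne
  have : IsMulCommutative B :=
    .of_setLike_mul_comm fun _ ha _ hb => setLike_mul_comm (hB ha) (hB hb)
  have : Infinite B := infinite_of_forall_not_isOfFinOrder
    (forall_coe_not_isOfFinOrder fun _ hb => not_isOfFinOrder_of_mem_zpowers hg (hB hb))
  exact infinite_abelianization_of_isMulCommutative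

end InfiniteAbelianization

section Dihedral

variable {n : ℕ}

theorem r_mem_zpowers_r_one (i : ZMod n) :
    DihedralGroup.r i ∈ Subgroup.zpowers (DihedralGroup.r 1 : DihedralGroup n) := by
  obtain ⟨k, rfl⟩ := ZMod.intCast_surjective i
  exact ⟨k, DihedralGroup.r_one_zpow k⟩

theorem sr_notMem_zpowers_r_one (i : ZMod n) :
    DihedralGroup.sr i ∉ Subgroup.zpowers (DihedralGroup.r 1 : DihedralGroup n) := by
  rintro ⟨k, hk⟩
  cases (DihedralGroup.r_one_zpow k).symm.trans hk

theorem index_zpowers_r_one :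
    (Subgroup.zpowers (DihedralGroup.r 1 : DihedralGroup n)).index = 2 := by
  refine Subgroup.index_eq_two_iff.2 ⟨DihedralGroup.sr 0, ?_⟩
  rintro (i | i)
  · rw [DihedralGroup.r_mul_sr]
    exact .inr ⟨r_mem_zpowers_r_one i, sr_notMem_zpowers_r_one _⟩
  · rw [DihedralGroup.sr_mul_sr]
    exact .inl ⟨r_mem_zpowers_r_one _, sr_notMem_zpowers_r_one i⟩

instance finiteIndex_zpowers_r_one :
    (Subgroup.zpowers (DihedralGroup.r 1 : DihedralGroup n)).FiniteIndex :=
  ⟨index_zpowers_r_one.trans_ne two_ne_zero⟩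

theorem not_isOfFinOrder_r_one : ¬IsOfFinOrder (DihedralGroup.r 1 : DihedralGroup 0) :=
  orderOf_eq_zero_iff.1 DihedralGroup.orderOf_r_one

end Dihedral

theorem torsionFree_subgroup_has_good_finite_index_subgroup_general
    {Q H D : Type*} [Group Q] [Group H] [Group D]
    (ρ : Q →* D) (R : Subgroup D) [R.FiniteIndex]
    (hR : ∀ B ≤ R, B ≠ ⊥ → Infinite (Abelianization B))
    (ψ : H →* ρ.ker) (hψ : Function.Surjective ψ)
    (A : Subgroup H) [A.Normal] (hab : ∀ a ∈ A, ∀ b ∈ A, a * b = b * a)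
    (hpow : ∀ h : H, ∃ n : ℕ, 1 ≤ n ∧ h ^ n ∈ A)
    (G : Subgroup Q) (hG : G ≠ ⊥)
    (htf : ∀ g ∈ G, g ≠ 1 → ¬IsOfFinOrder g) :
    ∃ G' : Subgroup G, G' ≠ ⊥ ∧ G'.FiniteIndex ∧ G'.index ≤ R.index ∧
      (Infinite (Abelianization G') ∨
        ∃ N : Subgroup G', N ≠ ⊥ ∧ N.Normal ∧ ∀ a ∈ N, ∀ b ∈ N, a * b = b * a) := by
  have htf_G := forall_coe_not_isOfFinOrder htf
  have : Nontrivial G := G.nontrivial_iff_ne_bot.2 hG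
  have : Infinite G := infinite_of_forall_not_isOfFinOrder htf_G
  let φ : G →* D := ρ.comp G.subtype
  let G' : Subgroup G := R.comap φ
  have hfin : G'.FiniteIndex := finiteIndex_comap R φ
  have hG' : G' ≠ ⊥ := ne_bot_of_finiteIndex hfin
  refine ⟨G', hG', hfin, index_comap_le_index R φ, ?_⟩
  by_cases himage : G'.map φ = ⊥
  · right
    have : Nontrivial G' := G'.nontrivial_iff_ne_bot.2 hG'
    have hker (g : G') : ρ (g : G) = 1 := G'.map_eq_bot_iff.1 himage g.2
    let ι : G' →* ρ.ker := (G.subtype.comp G'.subtype).codRestrict ρ.ker hker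
    have hι : Function.Injective ι := (MonoidHom.injective_codRestrict _ _ _).2
      (G.subtype_injective.comp G'.subtype_injective)
    exact exists_abelian_normal_subgroup_of_injective
      (forall_coe_not_isOfFinOrder fun g _ => htf_G g) hι hψ hab hpow
  · left
    have : Infinite (Abelianization (G'.map φ)) := hR _ (Subgroup.map_comap_le φ R) himage
    exact infinite_abelianization_of_surjective (φ.subgroupMap_surjective G')

/-- Group-theoretic skeleton of Theorem 3.2: if `ρ : Q → D∞` is a homomorphism into the
infinite dihedral group (`DihedralGroup 0`), and there is a surjection `ψ` of a group `H`
onto `ker ρ` together with a normal abelian subgroup `A` of `H` such that every element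
of `H` has a positive power in `A`, then every nontrivial torsion-free subgroup `G` of
`Q` contains a nontrivial subgroup `G'` of index at most 2 which either has infinite
abelianization or contains a nontrivial normal abelian subgroup. -/
theorem torsionFree_subgroup_has_good_finite_index_subgroup
    {Q H : Type*} [Group Q] [Group H]
    (ρ : Q →* DihedralGroup 0)
    (ψ : H →* ρ.ker) (hψ : Function.Surjective ψ)
    (A : Subgroup H) [A.Normal] (hab : ∀ a ∈ A, ∀ b ∈ A, a * b = b * a)
    (hpow : ∀ h : H, ∃ n : ℕ, 1 ≤ n ∧ h ^ n ∈ A)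
    (G : Subgroup Q) (hG : G ≠ ⊥)
    (htf : ∀ g ∈ G, g ≠ 1 → ¬IsOfFinOrder g) :
    ∃ G' : Subgroup G, G' ≠ ⊥ ∧ (G'.index = 1 ∨ G'.index = 2) ∧
      (Infinite (Abelianization G') ∨
        ∃ N : Subgroup G', N ≠ ⊥ ∧ N.Normal ∧ ∀ a ∈ N, ∀ b ∈ N, a * b = b * a) := by
  obtain ⟨G', hG', hfin, hle, h⟩ := torsionFree_subgroup_has_good_finite_index_subgroup_general
    ρ (.zpowers (.r 1)) (fun _ => infinite_abelianization_of_le_zpowers not_isOfFinOrder_r_one)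
    ψ hψ A hab hpow G hG htf
  have hle_two : G'.index ≤ 2 := hle.trans_eq index_zpowers_r_one
  have hne_zero : G'.index ≠ 0 := hfin.index_ne_zero
  exact ⟨G', hG', by lia, h⟩
end

section
/- For k ∈ ℤ, let σₖ : ℂ × [0,1] → ℂ × [0,1] be the Dehn twist homeomorphism σₖ(z, s) = (exp(2πiks)·z, s). If σₖ is isotopic rel boundary to the identity map of ℂ × [0,1], then k = 0. -/
open unitInterval

/-- The Dehn twist `σₖ(z, s) = (exp(2πiks)·z, s)` on `ℂ × [0,1]`. -/
noncomputable def dehnTwist (k : ℤ) : ℂ × I → ℂ × I :=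
  fun p => (Complex.exp (2 * Real.pi * Complex.I * (k : ℂ) * ((p.2 : ℝ) : ℂ)) * p.1, p.2)

/-- `f` and `g` are isotopic rel boundary: there is a continuous `H` from `f` to `g`
through homeomorphisms of `ℂ × [0,1]`, fixing `ℂ × {0,1}` pointwise at all times. -/
def IsotopicRelBoundary (f g : ℂ × I → ℂ × I) : Prop :=
  ∃ H : (ℂ × I) × I → ℂ × I,
    Continuous H ∧
    (∀ p, H (p, 0) = f p) ∧
    (∀ p, H (p, 1) = g p) ∧
    (∀ t : I, ∃ h : (ℂ × I) ≃ₜ (ℂ × I), ∀ p, H (p, t) = h p) ∧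
    (∀ (z : ℂ) (s t : I), s = 0 ∨ s = 1 → H ((z, s), t) = (z, s))

/-!
Follow the vertical arc `{w} × [0,1]` through the isotopy, projected to `ℂ`. The maps of the isotopy
and their inverses depend continuously on time, so the preimages of the core `{0} × [0,1]` at all
times lie in a single compact set. An arc far enough out therefore never meets the core, and its
projection is a homotopy rel endpoints in `ℂ \ {0}`. For `σₖ` the projected arc is a loop winding
`k` times around the origin, and lifting the homotopy through `exp` shows that the winding number
does not change.
-/

open Filter Set Topology

section HomeomorphFamily

variable {T X Y : Type*} [TopologicalSpace T] [TopologicalSpace X] [TopologicalSpace Y]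

theorem eventually_forall_ne_of_isCompact [T2Space Y] {f : T → X → Y}
    (hf : Continuous fun p : T × X => f p.1 p.2) {K : Set X} (hK : IsCompact K) {t : T} {y : Y}
    (hy : ∀ x ∈ K, f t x ≠ y) : ∀ᶠ p in 𝓝 (t, y), ∀ x ∈ K, f p.1 x ≠ p.2 := by
  refine hK.eventually_forall_of_forall_eventually
    (P := fun (p : T × Y) x => f p.1 x ≠ p.2) fun x hx => ?_
  have hfx : Continuous fun q : (T × Y) × X => f q.1.1 q.2 :=
    hf.comp (f := fun q : (T × Y) × X => (q.1.1, q.2)) (by fun_prop)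
  exact (isOpen_ne_fun hfx (by fun_prop)).mem_nhds (hy x hx)

variable [LocallyCompactSpace X] [T2Space X] [LocallyConnectedSpace X]

theorem continuous_uncurry_homeomorph_symm (h : T → X ≃ₜ Y)
    (hc : Continuous fun p : T × X => h p.1 p.2) :
    Continuous fun p : T × Y => (h p.1).symm p.2 := by
  refine continuous_iff_continuousAt.2 fun ⟨t, y⟩ N hN => ?_
  have : T2Space Y := (h t).t2Space
  have : LocallyConnectedSpace Y := (h t).symm.locallyConnectedSpace
  obtain ⟨K, hK, hKN, hKc⟩ := local_compact_nhds hN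
  -- A small connected neighbourhood `V` of `y` has preimages that cannot cross `frontier K`.
  have hfr : ∀ᶠ p in 𝓝 (t, y), ∀ x ∈ frontier K, h p.1 x ≠ p.2 := by
    refine eventually_forall_ne_of_isCompact (f := fun s x => h s x) hc
      (hKc.of_isClosed_subset isClosed_frontier hKc.isClosed.frontier_subset) fun x hx hxy => ?_
    rw [← hxy, Homeomorph.symm_apply_apply] at hK
    exact hx.2 (mem_interior_iff_mem_nhds.2 hK)
  obtain ⟨A, hA, B, hB, hAB⟩ := mem_nhds_prod_iff.1 hfr
  obtain ⟨V, ⟨hVo, hyV, hVc⟩, hVB⟩ := (LocallyConnectedSpace.open_connected_basis y).mem_iff.1 hB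
  have hV : ∀ᶠ t' in 𝓝 t, h t' ((h t).symm y) ∈ V := by
    have hct : Continuous fun t' => h t' ((h t).symm y) :=
      hc.comp (f := fun t' => (t', (h t).symm y)) (by fun_prop)
    exact hct.continuousAt (hVo.mem_nhds (by simpa using hyV))
  refine mem_map.2 <| mem_of_superset (prod_mem_nhds (inter_mem hA hV) (hVo.mem_nhds hyV)) ?_
  rintro ⟨t', y'⟩ ⟨⟨ht'A, ht'V⟩, hy'V⟩
  have hsub : h t' ⁻¹' V ⊆ interior K := by
    refine ((h t').isPreconnected_preimage.2 hVc.isPreconnected).subset_of_closure_inter_subset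
      isOpen_interior ⟨_, ht'V, mem_interior_iff_mem_nhds.2 hK⟩ ?_
    rintro x ⟨hxK, hxV⟩
    by_contra hx
    exact hAB (mk_mem_prod ht'A (hVB hxV)) x ⟨closure_mono interior_subset hxK, hx⟩ rfl
  exact hKN (interior_subset (hsub (by simpa using hy'V)))

theorem isCompact_iUnion_homeomorph_preimage [CompactSpace T] (h : T → X ≃ₜ Y)
    (hc : Continuous fun p : T × X => h p.1 p.2) {K : Set Y} (hK : IsCompact K) :
    IsCompact (⋃ t, h t ⁻¹' K) := by
  convert (isCompact_univ.prod hK).image (continuous_uncurry_homeomorph_symm h hc)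
  ext x
  simp only [mem_iUnion, mem_preimage, mem_image, mem_prod, mem_univ, true_and, Prod.exists,
    Homeomorph.symm_apply_eq]
  exact exists_congr fun t => by simp

end HomeomorphFamily

theorem IsotopicRelBoundary.eventually_homotopicRel {f g : ℂ × I → ℂ × I}
    (h : IsotopicRelBoundary f g) :
    ∀ᶠ w in cocompact ℂ, ∀ γ₀ γ₁ : C(I, {z : ℂ // z ≠ 0}),
      (∀ s, (γ₀ s : ℂ) = (f (w, s)).1) → (∀ s, (γ₁ s : ℂ) = (g (w, s)).1) →
        γ₀.HomotopicRel γ₁ {0, 1} := by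
  obtain ⟨H, hH, hH0, hH1, hhomeo, hbd⟩ := h
  choose e he using hhomeo
  have : LocallyPathConnectedSpace I := (convex_Icc (0 : ℝ) 1).locallyPathConnectedSpace
  have hcont : Continuous fun p : I × (ℂ × I) => e p.1 p.2 := by
    simp only [← he]
    exact hH.comp (f := fun p : I × (ℂ × I) => (p.2, p.1)) (by fun_prop)
  have hcore : IsCompact (⋃ t, e t ⁻¹' ({0} ×ˢ univ)) :=
    isCompact_iUnion_homeomorph_preimage e hcont (isCompact_singleton.prod isCompact_univ)
  filter_upwards [(hcore.image continuous_fst).compl_mem_cocompact] with w hw γ₀ γ₁ hγ₀ hγ₁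
  have hne (p : I × I) : (H ((w, p.2), p.1)).1 ≠ 0 := fun hp =>
    hw ⟨(w, p.2), mem_iUnion.2 ⟨p.1, by simpa [← he] using hp⟩, rfl⟩
  exact ⟨{
    toFun p := ⟨(H ((w, p.2), p.1)).1, hne p⟩
    continuous_toFun := by fun_prop
    map_zero_left s := Subtype.ext (by rw [hγ₀, ← hH0])
    map_one_left s := Subtype.ext (by rw [hγ₁, ← hH1])
    prop' t s hs := Subtype.ext (by
      change (H ((w, s), t)).1 = γ₀ s
      rw [hγ₀, ← hH0, hbd w s t hs, hbd w s 0 hs]) }⟩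

/-- The logarithm, starting at `log w`, of the planar projection of the image of the vertical arc
`{w} × [0,1]` under `dehnTwist k`. -/
noncomputable def dehnTwistArcLog (w : ℂ) (k : ℤ) : C(I, ℂ) where
  toFun s := 2 * Real.pi * Complex.I * k * (s : ℝ) + Complex.log w

theorem exp_dehnTwistArcLog {w : ℂ} (hw : w ≠ 0) (k : ℤ) (s : I) :
    Complex.exp (dehnTwistArcLog w k s) = (dehnTwist k (w, s)).1 := by
  simp [dehnTwistArcLog, dehnTwist, Complex.exp_add, Complex.exp_log hw]

theorem dehnTwistArcLog_zero (w : ℂ) (k : ℤ) : dehnTwistArcLog w k 0 = Complex.log w := by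
  simp [dehnTwistArcLog]

theorem dehnTwistArcLog_one_inj {w : ℂ} {k l : ℤ} :
    dehnTwistArcLog w k 1 = dehnTwistArcLog w l 1 ↔ k = l := by
  simp [dehnTwistArcLog, Complex.I_ne_zero, Real.pi_ne_zero]

theorem dehnTwist_zero : dehnTwist 0 = id := by
  ext p <;> simp [dehnTwist]

theorem dehnTwist_isotopic_id_iff_zero_general {k l : ℤ}
    (h : IsotopicRelBoundary (dehnTwist k) (dehnTwist l)) : k = l := by
  obtain ⟨w, hw, hw0⟩ :=
    (h.eventually_homotopicRel.and isCompact_singleton.compl_mem_cocompact).exists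
  have hlog : (dehnTwistArcLog w k).HomotopicRel (dehnTwistArcLog w l) {0, 1} :=
    (Complex.isCoveringMap_exp.homotopicRel_iff_comp
      ⟨0, by simp, by simp only [dehnTwistArcLog_zero]⟩).2
        (hw _ _ (exp_dehnTwistArcLog hw0 k) (exp_dehnTwistArcLog hw0 l))
  exact dehnTwistArcLog_one_inj.1 (hlog.some.fst_eq_snd (by simp))

/-- If the Dehn twist `σₖ` is isotopic rel boundary to the identity, then `k = 0`. -/
theorem dehnTwist_isotopic_id_iff_zero (k : ℤ)
    (h : IsotopicRelBoundary (dehnTwist k) id) : k = 0 := by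
  exact dehnTwist_isotopic_id_iff_zero_general (dehnTwist_zero.symm ▸ h)
end
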